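/- For λ ∈ K^×, let III⁰³_λ be the evolution algebra on K³ with natural basis {e₁,e₂,e₃} and products e₁² = e₂, e₂² = e₃, e₃² = λe₁, e_i e_j = 0 for i ≠ j. Then for λ, μ ∈ K^×, the algebras III⁰³_λ and III⁰³_μ are isomorphic as K-algebras if and only if there exist k ∈ K^× and natural numbers r, s with λ^(2^r) = k⁷ μ^(2^s). -/

import Mathlib

/-!
If the `n`-th plenary power of `x` is `c • x`, then that of `k • x` is
`(k ^ (2 ^ n - 1) * c) • (k • x)` and that of the `s`-th plenary power `x^[s]` is
`c ^ 2 ^ s • x^[s]`. Both replacements turn a cyclic generator into a cyclic generator, and the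
parameter of a generator determines the multiplication table, so the relation between `λ` and `μ`
makes the two algebras isomorphic. Conversely, the squares of a natural basis of a cyclic algebra
with nonzero parameter are linearly independent, so this basis is unique up to order and scalars.
Hence two generators `x`, `y` of one algebra satisfy `x = k • y^[s]`, and comparing parameters gives
the relation.
-/

section PlenaryPow

/-- The plenary powers of an element of a nonassociative algebra, obtained by repeated squaring and
indexed from zero: `x, x * x, (x * x) * (x * x), …`. -/
def plenaryPow {A : Type*} [Mul A] (x : A) (i : ℕ) : A :=
  (fun y ↦ y * y)^[i] x

theorem plenaryPow_zero {A : Type*} [Mul A] (x : A) : plenaryPow x 0 = x := rfl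

theorem plenaryPow_succ {A : Type*} [Mul A] (x : A) (i : ℕ) :
    plenaryPow x (i + 1) = plenaryPow x i * plenaryPow x i :=
  Function.iterate_succ_apply' _ i x

theorem plenaryPow_mul_self {A : Type*} [Mul A] (x : A) (i : ℕ) :
    plenaryPow (x * x) i = plenaryPow x (i + 1) := rfl

theorem plenaryPow_plenaryPow_comm {A : Type*} [Mul A] (x : A) (i j : ℕ) :
    plenaryPow (plenaryPow x i) j = plenaryPow (plenaryPow x j) i :=
  Function.Commute.iterate_iterate_self _ j i x

theorem map_plenaryPow {A B F : Type*} [Mul A] [Mul B] [FunLike F A B] [MulHomClass F A B]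
    (φ : F) (x : A) (i : ℕ) : φ (plenaryPow x i) = plenaryPow (φ x) i :=
  Function.Semiconj.iterate_right (fun y ↦ map_mul φ y y) i x

variable {K A : Type*} [CommMonoid K] [Mul A] [MulAction K A] [SMulCommClass K A A]
  [IsScalarTower K A A]

theorem plenaryPow_smul (k : K) (x : A) (i : ℕ) :
    plenaryPow (k • x) i = k ^ 2 ^ i • plenaryPow x i := by
  induction i with
  | zero => simp only [plenaryPow_zero, pow_zero, pow_one]
  | succ i ih => rw [plenaryPow_succ, ih, smul_mul_smul_comm, ← plenaryPow_succ, ← pow_add,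
      pow_succ, mul_two]

theorem plenaryPow_smul_of_eq_smul {n : ℕ} {c : K} {x : A} (hx : plenaryPow x n = c • x) (k : K) :
    plenaryPow (k • x) n = (k ^ (2 ^ n - 1) * c) • (k • x) := by
  rw [plenaryPow_smul, hx, smul_smul, smul_smul, mul_right_comm,
    pow_sub_one_mul (by positivity)]

theorem plenaryPow_plenaryPow_of_eq_smul {n : ℕ} {c : K} {x : A} (hx : plenaryPow x n = c • x)
    (s : ℕ) : plenaryPow (plenaryPow x s) n = c ^ 2 ^ s • plenaryPow x s := by
  rw [plenaryPow_plenaryPow_comm, hx, plenaryPow_smul]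

end PlenaryPow

section NaturalBasis

variable {ι κ K A B : Type*} [CommRing K]
  [NonUnitalNonAssocRing A] [Module K A] [NonUnitalNonAssocRing B] [Module K B]

/-- A basis of a nonassociative algebra whose distinct members have product zero; an evolution
algebra is a commutative algebra admitting such a basis. -/
def IsNaturalBasis (b : Module.Basis ι K A) : Prop :=
  Pairwise fun i j ↦ b i * b j = 0

namespace IsNaturalBasis

variable {b : Module.Basis ι K A} [SMulCommClass K A A]

theorem basis_mul (hb : IsNaturalBasis b) (i : ι) (x : A) :
    b i * x = b.repr x i • (b i * b i) := by
  suffices LinearMap.mulLeft K (b i) = (b.coord i).smulRight (b i * b i) from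
    LinearMap.congr_fun this x
  refine b.ext fun j ↦ ?_
  rcases eq_or_ne i j with rfl | hij
  · simp
  · simp [hb hij, hij.symm]

variable [IsScalarTower K A A]

theorem mul_eq_linearCombination (hb : IsNaturalBasis b) (x y : A) :
    x * y = Finsupp.linearCombination K (fun i ↦ b i * b i) (b.repr x * b.repr y) := by
  suffices ∀ u : ι →₀ K, Finsupp.linearCombination K b u * y =
      Finsupp.linearCombination K (fun i ↦ b i * b i) (u * b.repr y) by
    simpa only [b.linearCombination_repr] using this (b.repr x)
  intro u
  induction u using Finsupp.induction_linear with
  | zero => simp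
  | add u v hu hv => rw [map_add, add_mul, hu, hv, add_mul, map_add]
  | single i a =>
    have hsingle : Finsupp.single i a * b.repr y = Finsupp.single i (a * b.repr y i) := by
      ext j
      rcases eq_or_ne i j with rfl | hij
      · simp
      · simp [hij]
    rw [hsingle, Finsupp.linearCombination_single, Finsupp.linearCombination_single,
      smul_mul_assoc, hb.basis_mul, mul_smul]

protected theorem mul_comm (hb : IsNaturalBasis b) (x y : A) : x * y = y * x := by
  rw [hb.mul_eq_linearCombination, hb.mul_eq_linearCombination y, mul_comm (b.repr x)]

theorem repr_mul_repr_eq_zero (hb : IsNaturalBasis b)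
    (hsq : LinearIndependent K fun i ↦ b i * b i) {x y : A} (hxy : x * y = 0) (i : ι) :
    b.repr x i * b.repr y i = 0 := by
  have hzero : b.repr x * b.repr y = 0 :=
    hsq (by rw [← hb.mul_eq_linearCombination, hxy, map_zero])
  exact DFunLike.congr_fun hzero i

theorem mul_self_ne_zero [IsReduced K] (hb : IsNaturalBasis b)
    (hsq : LinearIndependent K fun i ↦ b i * b i) {x : A} (hx : x ≠ 0) : x * x ≠ 0 := by
  refine fun hxx ↦ hx (b.ext_elem fun i ↦ ?_)
  have hi : b.repr x i ^ 2 = 0 := by rw [sq, hb.repr_mul_repr_eq_zero hsq hxx]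
  rw [eq_zero_of_pow_eq_zero hi, map_zero, Finsupp.zero_apply]

theorem exists_eq_smul [IsDomain K] (hb : IsNaturalBasis b)
    (hsq : LinearIndependent K fun i ↦ b i * b i) {g : Module.Basis κ K A}
    (hg : IsNaturalBasis g) (i : ι) : ∃ (k : K) (j : κ), b i = k • g j := by
  obtain ⟨j, hj⟩ : ∃ j, b.repr (g j) i ≠ 0 := by
    by_contra! hzero
    have hcoord : b.coord i = 0 := g.ext hzero
    simpa using LinearMap.congr_fun hcoord (b i)
  have hmul {l : κ} (hl : l ≠ j) : g l * b i = 0 := by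
    have hrepr : b.repr (g l) i = 0 :=
      (mul_eq_zero.mp (hb.repr_mul_repr_eq_zero hsq (hg hl) i)).resolve_right hj
    rw [hb.mul_comm, hb.basis_mul, hrepr, zero_smul]
  have hrepr {l : κ} (hl : l ≠ j) : g.repr (b i) l = 0 :=
    (b.smul_eq_zero.mp ((hg.basis_mul l (b i)).symm.trans (hmul hl))).resolve_right
      (hb.mul_self_ne_zero hsq (g.ne_zero l))
  refine ⟨g.repr (b i) j, j, g.ext_elem fun l ↦ ?_⟩
  rcases eq_or_ne l j with rfl | hl
  · simp
  · simp [hrepr hl, hl]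

theorem exists_units_smul_reindex (hb : IsNaturalBasis b) (u : κ → Kˣ) (σ : κ ≃ ι) :
    ∃ g : Module.Basis κ K A, IsNaturalBasis g ∧ ∀ i, g i = u i • b (σ i) := by
  have hg (i : κ) : (b.reindex σ.symm).unitsSMul u i = u i • b (σ i) := by
    simp [Module.Basis.unitsSMul_apply]
  refine ⟨_, fun i j hij ↦ ?_, hg⟩
  dsimp only
  rw [hg, hg, Units.smul_def, Units.smul_def, smul_mul_smul_comm, hb (σ.injective.ne hij),
    smul_zero]

protected theorem map_mul [SMulCommClass K B B] [IsScalarTower K B B] (hb : IsNaturalBasis b)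
    (φ : A →ₗ[K] B) (hφ : Pairwise fun i j ↦ φ (b i) * φ (b j) = 0)
    (hsq : ∀ i, φ (b i * b i) = φ (b i) * φ (b i)) (x y : A) : φ (x * y) = φ x * φ y := by
  suffices (LinearMap.mul K A).compr₂ φ = (LinearMap.mul K B).compl₁₂ φ φ from
    LinearMap.congr_fun₂ this x y
  refine b.ext fun i ↦ b.ext fun j ↦ ?_
  rcases eq_or_ne i j with rfl | hij
  · exact hsq i
  · simp [hb hij, hφ hij]

end IsNaturalBasis

end NaturalBasis

section CyclicGenerator

variable {K A B : Type*} [Field K]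
  [NonUnitalNonAssocRing A] [Module K A] [NonUnitalNonAssocRing B] [Module K B]

/-- The element `x` generates `A` as a cyclic evolution algebra of dimension `n` with parameter `c`:
its first `n` plenary powers form a natural basis, and the next one is `c • x`. For `n = 3` these
are the algebras `III⁰³_c`, with `x = e₁`. -/
structure IsCyclicGenerator (n : ℕ) (c : K) (x : A) : Prop where
  exists_naturalBasis :
    ∃ b : Module.Basis (Fin n) K A, IsNaturalBasis b ∧ ∀ i, b i = plenaryPow x i
  plenaryPow_eq_smul : plenaryPow x n = c • x

theorem isCyclicGenerator_three {c : K} (e : Module.Basis (Fin 3) K A) (he : IsNaturalBasis e)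
    (he0 : e 0 * e 0 = e 1) (he1 : e 1 * e 1 = e 2) (he2 : e 2 * e 2 = c • e 0) :
    IsCyclicGenerator 3 c (e 0) := by
  have h1 : plenaryPow (e 0) 1 = e 1 := he0
  have h2 : plenaryPow (e 0) 2 = e 2 := by rw [plenaryPow_succ, h1, he1]
  refine ⟨⟨e, he, fun i ↦ ?_⟩, by rw [plenaryPow_succ, h2, he2]⟩
  fin_cases i
  exacts [rfl, h1.symm, h2.symm]

namespace IsCyclicGenerator

variable {n : ℕ} {c d : K} {x y : A}

theorem ne_zero [NeZero n] (hx : IsCyclicGenerator n c x) : x ≠ 0 := by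
  obtain ⟨⟨b, -, hbx⟩, -⟩ := hx
  have hb0 : b 0 = x := hbx 0
  exact hb0 ▸ b.ne_zero 0

theorem map (hx : IsCyclicGenerator n c x) (φ : A ≃ₗ[K] B) (hφ : ∀ x y, φ (x * y) = φ x * φ y) :
    IsCyclicGenerator n c (φ x) := by
  obtain ⟨⟨b, hb, hbx⟩, hpow⟩ := hx
  have hφpow (i : ℕ) : φ (plenaryPow x i) = plenaryPow (φ x) i :=
    map_plenaryPow (⟨φ, hφ⟩ : A →ₙ* B) x i
  refine ⟨⟨b.map φ, fun i j hij ↦ ?_, fun i ↦ ?_⟩, ?_⟩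
  · simp only [Module.Basis.map_apply, ← hφ, hb hij, map_zero]
  · rw [Module.Basis.map_apply, hbx, hφpow]
  · rw [← hφpow, hpow, map_smul]

variable [SMulCommClass K A A] [IsScalarTower K A A] [SMulCommClass K B B] [IsScalarTower K B B]

theorem smul (hx : IsCyclicGenerator n c x) {k : K} (hk : k ≠ 0) :
    IsCyclicGenerator n (k ^ (2 ^ n - 1) * c) (k • x) := by
  obtain ⟨⟨b, hb, hbx⟩, hpow⟩ := hx
  obtain ⟨g, hg, hgb⟩ :=
    hb.exists_units_smul_reindex (fun i : Fin n ↦ Units.mk0 k hk ^ 2 ^ (i : ℕ)) (Equiv.refl _)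
  refine ⟨⟨g, hg, fun i ↦ ?_⟩, plenaryPow_smul_of_eq_smul hpow k⟩
  simp [hgb, hbx, plenaryPow_smul, Units.smul_def]

variable [NeZero n]

theorem mul_self (hx : IsCyclicGenerator n c x) (hc : c ≠ 0) :
    IsCyclicGenerator n (c ^ 2) (x * x) := by
  obtain ⟨⟨b, hb, hbx⟩, hpow⟩ := hx
  obtain ⟨m, rfl⟩ := Nat.exists_eq_succ_of_ne_zero (NeZero.ne n)
  obtain ⟨g, hg, hgb⟩ :=
    hb.exists_units_smul_reindex (Fin.snoc (fun _ ↦ 1) (Units.mk0 c hc)) (finRotate (m + 1))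
  refine ⟨⟨g, hg, fun i ↦ ?_⟩, plenaryPow_plenaryPow_of_eq_smul hpow 1⟩
  rw [hgb, hbx, plenaryPow_mul_self]
  cases i using Fin.lastCases with
  | last => simpa [Units.smul_def, plenaryPow_zero] using hpow.symm
  | cast i => simp

protected theorem plenaryPow (hx : IsCyclicGenerator n c x) (hc : c ≠ 0) (s : ℕ) :
    IsCyclicGenerator n (c ^ 2 ^ s) (plenaryPow x s) := by
  induction s generalizing x c with
  | zero => rwa [pow_zero, pow_one]
  | succ s ih =>
    rw [pow_succ', pow_mul, ← plenaryPow_mul_self]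
    exact ih (hx.mul_self hc) (pow_ne_zero 2 hc)

theorem exists_eq_pow_mul_pow (hx : IsCyclicGenerator n c x) (hc : c ≠ 0)
    (hy : IsCyclicGenerator n d y) :
    ∃ (k : K) (s : ℕ), k ≠ 0 ∧ c = k ^ (2 ^ n - 1) * d ^ 2 ^ s := by
  obtain ⟨b, hb, hbx⟩ := hx.exists_naturalBasis
  obtain ⟨g, hg, hgy⟩ := hy.exists_naturalBasis
  have hsq : LinearIndependent K fun i ↦ b i * b i := by
    obtain ⟨⟨q, -, hq⟩, -⟩ := hx.mul_self hc
    have hqb : (fun i ↦ b i * b i) = q := by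
      ext i
      rw [hq, hbx, plenaryPow_mul_self, plenaryPow_succ]
    exact hqb ▸ q.linearIndependent
  obtain ⟨k, s, hbg⟩ := hb.exists_eq_smul hsq hg 0
  have hxy : x = k • plenaryPow y s := by
    rw [← hgy, ← hbg, hbx, Fin.val_zero, plenaryPow_zero]
  refine ⟨k, s, ?_, smul_left_injective K hx.ne_zero ?_⟩
  · rintro rfl
    exact hx.ne_zero (by rw [hxy, zero_smul])
  · have hpow := plenaryPow_smul_of_eq_smul
      (plenaryPow_plenaryPow_of_eq_smul hy.plenaryPow_eq_smul s) k
    rwa [← hxy, hx.plenaryPow_eq_smul] at hpow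

theorem exists_linearEquiv_map_mul {y : B} (hx : IsCyclicGenerator n c x)
    (hy : IsCyclicGenerator n c y) : ∃ φ : A ≃ₗ[K] B, ∀ x y, φ (x * y) = φ x * φ y := by
  obtain ⟨⟨b, hb, hbx⟩, hxpow⟩ := hx
  obtain ⟨⟨g, hg, hgy⟩, hypow⟩ := hy
  let φ : A ≃ₗ[K] B := b.equiv g (Equiv.refl _)
  have hφb (i : Fin n) : φ (b i) = g i := b.equiv_apply i g _
  have hφx : φ x = y := by
    simpa only [hbx, hgy, Fin.val_zero, plenaryPow_zero] using hφb 0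
  have hφpow {i : ℕ} (hi : i ≤ n) : φ (plenaryPow x i) = plenaryPow y i := by
    rcases hi.lt_or_eq with hlt | rfl
    · simpa only [hbx, hgy] using hφb ⟨i, hlt⟩
    · rw [hxpow, hypow, map_smul, hφx]
  refine ⟨φ, hb.map_mul φ.toLinearMap (fun i j hij ↦ ?_) fun i ↦ ?_⟩
  · simpa [hφb] using hg hij
  · simp only [LinearEquiv.coe_coe, hφb, hgy]
    rw [hbx, ← plenaryPow_succ, ← plenaryPow_succ, hφpow i.isLt]

end IsCyclicGenerator

end CyclicGenerator

theorem III03_iso_iff_general {K A B : Type*} [Field K]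
    [NonUnitalNonAssocRing A] [Module K A] [SMulCommClass K A A] [IsScalarTower K A A]
    [NonUnitalNonAssocRing B] [Module K B] [SMulCommClass K B B] [IsScalarTower K B B]
    {n : ℕ} [NeZero n] {lam mu : K} (hlam : lam ≠ 0) (hmu : mu ≠ 0) {x : A} {y : B}
    (hx : IsCyclicGenerator n lam x) (hy : IsCyclicGenerator n mu y) :
    (∃ φ : A ≃ₗ[K] B, ∀ x y : A, φ (x * y) = φ x * φ y) ↔
      ∃ (k : K) (r s : ℕ), k ≠ 0 ∧ lam ^ 2 ^ r = k ^ (2 ^ n - 1) * mu ^ 2 ^ s := by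
  constructor
  · rintro ⟨φ, hφ⟩
    obtain ⟨k, s, hk, h⟩ := (hx.map φ hφ).exists_eq_pow_mul_pow hlam hy
    exact ⟨k, 0, s, hk, by rwa [pow_zero, pow_one]⟩
  · rintro ⟨k, r, s, hk, h⟩
    have hx' : IsCyclicGenerator n (k ^ (2 ^ n - 1) * mu ^ 2 ^ s) (plenaryPow x r) :=
      h ▸ hx.plenaryPow hlam r
    exact hx'.exists_linearEquiv_map_mul ((hy.plenaryPow hmu s).smul hk)

/-- For `λ ∈ K^×`, `III⁰³_λ` is the evolution algebra with natural basis
`{e₁,e₂,e₃}` and products `e₁² = e₂`, `e₂² = e₃`, `e₃² = λe₁`, `e_i e_j = 0` for `i ≠ j`.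
For `λ, μ ∈ K^×`, `III⁰³_λ ≅ III⁰³_μ` as `K`-algebras iff there are `k ∈ K^×` and naturals
`r, s` with `λ^(2^r) = k⁷ μ^(2^s)`. -/
theorem III03_iso_iff {K A B : Type*} [Field K]
    [NonUnitalNonAssocCommRing A] [Module K A] [SMulCommClass K A A] [IsScalarTower K A A]
    [NonUnitalNonAssocCommRing B] [Module K B] [SMulCommClass K B B] [IsScalarTower K B B]
    (lam mu : K) (hlam : lam ≠ 0) (hmu : mu ≠ 0)
    (e : Module.Basis (Fin 3) K A) (hen : ∀ i j : Fin 3, i ≠ j → e i * e j = 0)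
    (he0 : e 0 * e 0 = e 1) (he1 : e 1 * e 1 = e 2) (he2 : e 2 * e 2 = lam • e 0)
    (f : Module.Basis (Fin 3) K B) (hfn : ∀ i j : Fin 3, i ≠ j → f i * f j = 0)
    (hf0 : f 0 * f 0 = f 1) (hf1 : f 1 * f 1 = f 2) (hf2 : f 2 * f 2 = mu • f 0) :
    (∃ φ : A ≃ₗ[K] B, ∀ x y : A, φ (x * y) = φ x * φ y) ↔
      ∃ (k : K) (r s : ℕ), k ≠ 0 ∧ lam ^ 2 ^ r = k ^ 7 * mu ^ 2 ^ s := by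
  exact III03_iso_iff_general hlam hmu (isCyclicGenerator_three e hen he0 he1 he2)
    (isCyclicGenerator_three f hfn hf0 hf1 hf2)
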